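/- Dual functional property of the (p,q)-blossom: let n ≥ 1, let p, q be reals with 0 < q < p, let P_0, …, P_n be reals, let S(t) = Σ_{k=0}^{n} P_k B_k^n(t;p,q), and let s : ℝ^n → ℝ be the (p,q)-blossom of S. Then for each k = 0, …, n, P_k = s(0, …, 0, p^{n−1}, p^{n−2}q, …, p^{n−k}q^{k−1}), where the first n−k arguments are 0 and the remaining k arguments are p^{n−1}, p^{n−2}q, …, p^{n−k}q^{k−1}. -/

import Mathlib

/-- The (p,q)-integer `[n]_{p,q} = Σ_{j=0}^{n-1} p^{n-1-j} q^j`. -/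
noncomputable def pqInt (p q : ℝ) (n : ℕ) : ℝ :=
  ∑ j ∈ Finset.range n, p ^ (n - 1 - j) * q ^ j

/-- The (p,q)-factorial `[n]_{p,q}! = ∏_{j=1}^{n} [j]_{p,q}`. -/
noncomputable def pqFact (p q : ℝ) : ℕ → ℝ
  | 0 => 1
  | n + 1 => pqFact p q n * pqInt p q (n + 1)

/-- The (p,q)-binomial coefficient `[n choose k]_{p,q}`. -/
noncomputable def pqBinom (p q : ℝ) (n k : ℕ) : ℝ :=
  pqFact p q n / (pqFact p q k * pqFact p q (n - k))

/-- The (p,q)-Bernstein basis function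
`B_k^n(t;p,q) = p^{k(k-1)/2 - n(n-1)/2} [n choose k]_{p,q} t^k ∏_{s=0}^{n-k-1} (p^s - q^s t)`. -/
noncomputable def pqBernstein (p q : ℝ) (n k : ℕ) (t : ℝ) : ℝ :=
  p ^ (k * (k - 1) / 2) / p ^ (n * (n - 1) / 2) * pqBinom p q n k * t ^ k *
    ∏ s ∈ Finset.range (n - k), (p ^ s - q ^ s * t)

/-- The `k`-th elementary symmetric polynomial in `n` variables:
`φ_{n,k}(u_1, …, u_n) = Σ_{1 ≤ i_1 < … < i_k ≤ n} u_{i_1} ⋯ u_{i_k}`. -/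
noncomputable def esymmEval (n k : ℕ) (u : Fin n → ℝ) : ℝ :=
  ∑ S ∈ Finset.powersetCard k (Finset.univ : Finset (Fin n)), ∏ i ∈ S, u i

/-- A function `f : ℝ^n → ℝ` is symmetric if it is invariant under all permutations
of its arguments. -/
def IsSymmetricFn (n : ℕ) (f : (Fin n → ℝ) → ℝ) : Prop :=
  ∀ (σ : Equiv.Perm (Fin n)) (u : Fin n → ℝ), f (fun i => u (σ i)) = f u

/-- A function `f : ℝ^n → ℝ` is multiaffine if, fixing all variables except the `j`-th,
the resulting one-variable function is affine (degree at most one). -/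
def IsMultiaffine (n : ℕ) (f : (Fin n → ℝ) → ℝ) : Prop :=
  ∀ (j : Fin n) (u : Fin n → ℝ), ∃ a b : ℝ,
    ∀ x : ℝ, f (Function.update u j x) = a * x + b

/-!
Moving the arguments of the blossom from `w_i t` to `0` or `w_k` one at a time, where
`w_i = p^{n-1-i} q^i`, is an affine interpolation because `w_r t = (q/p)^{r-k} t · w_k`. The
resulting de Casteljau scheme has exactly the weights of the degree-raising recursion
`B_{k+1}^{r+1} = (1 - (q/p)^{r-k-1} t) B_{k+1}^r + (q/p)^{r-k} t B_k^r`, so after `n` steps it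
expresses `S` in the Bernstein basis with the dual functional values as coefficients. These are the
`P_k` by linear independence: `B_k^n` vanishes at `0` to order exactly `k`.
-/

section Factorial

variable {p q : ℝ}

lemma pqInt_add (p q : ℝ) (a b : ℕ) :
    pqInt p q (a + b) = p ^ b * pqInt p q a + q ^ a * pqInt p q b := by
  unfold pqInt
  rw [Finset.sum_range_add, Finset.mul_sum, Finset.mul_sum]
  congr 1 <;> refine Finset.sum_congr rfl fun j hj => ?_
  · have hj : j < a := Finset.mem_range.mp hj
    rw [show a + b - 1 - j = b + (a - 1 - j) by omega, pow_add, mul_assoc]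
  · rw [show a + b - 1 - (a + j) = b - 1 - j by omega, pow_add]
    ring

lemma pqInt_pos (hp : 0 < p) (hq : 0 < q) {n : ℕ} (hn : n ≠ 0) : 0 < pqInt p q n :=
  Finset.sum_pos (fun _ _ => by positivity) (Finset.nonempty_range_iff.mpr hn)

lemma pqFact_pos (hp : 0 < p) (hq : 0 < q) (n : ℕ) : 0 < pqFact p q n := by
  induction n with
  | zero => exact one_pos
  | succ n ih => exact mul_pos ih (pqInt_pos hp hq n.succ_ne_zero)

lemma pqFact_ne_zero_of_le {m n : ℕ} (hmn : m ≤ n) (hn : pqFact p q n ≠ 0) :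
    pqFact p q m ≠ 0 := by
  induction n, hmn using Nat.le_induction with
  | base => exact hn
  | succ n _ ih => exact ih (left_ne_zero_of_mul hn)

lemma pqBinom_ne_zero {n k : ℕ} (hk : k ≤ n) (hn : pqFact p q n ≠ 0) : pqBinom p q n k ≠ 0 :=
  div_ne_zero hn <|
    mul_ne_zero (pqFact_ne_zero_of_le hk hn) (pqFact_ne_zero_of_le (n.sub_le k) hn)

lemma pqBinom_zero_right {n : ℕ} (hn : pqFact p q n ≠ 0) : pqBinom p q n 0 = 1 := by
  simp [pqBinom, pqFact, hn]

lemma pqBinom_self {n : ℕ} (hn : pqFact p q n ≠ 0) : pqBinom p q n n = 1 := by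
  simp [pqBinom, pqFact, hn]

lemma pqBinom_succ_succ {r k : ℕ} (hk : k < r) (hr : pqFact p q (r + 1) ≠ 0) :
    pqBinom p q (r + 1) (k + 1) =
      p ^ (k + 1) * pqBinom p q r (k + 1) + q ^ (r - k) * pqBinom p q r k := by
  have hfact_k : pqFact p q (k + 1) ≠ 0 := pqFact_ne_zero_of_le (by omega) hr
  have hfact_sub : pqFact p q (r - k) ≠ 0 := pqFact_ne_zero_of_le (by omega) hr
  have hint : pqInt p q (r + 1) = p ^ (k + 1) * pqInt p q (r - k) +
      q ^ (r - k) * pqInt p q (k + 1) := by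
    rw [← pqInt_add, show r - k + (k + 1) = r + 1 by omega]
  obtain ⟨d, hd⟩ : ∃ d, r - k = d + 1 := ⟨r - k - 1, by omega⟩
  simp only [pqBinom, show r + 1 - (k + 1) = r - k by omega, show r - (k + 1) = d by omega, hd,
    pqFact, hint] at hfact_k hfact_sub ⊢
  obtain ⟨_, _⟩ := mul_ne_zero_iff.mp hfact_k
  obtain ⟨_, _⟩ := mul_ne_zero_iff.mp hfact_sub
  field_simp

end Factorial

section Bernstein

variable {p q : ℝ}

lemma pqBernstein_self (hp : p ≠ 0) {n : ℕ} (hn : pqFact p q n ≠ 0) (t : ℝ) :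
    pqBernstein p q n n t = t ^ n := by
  simp [pqBernstein, pqBinom_self hn, hp]

lemma pqBernstein_succ_zero (hp : p ≠ 0) {r : ℕ} (hr : pqFact p q (r + 1) ≠ 0) (t : ℝ) :
    pqBernstein p q (r + 1) 0 t = (1 - (q / p) ^ r * t) * pqBernstein p q r 0 t := by
  have hr' : pqFact p q r ≠ 0 := pqFact_ne_zero_of_le r.le_succ hr
  simp only [pqBernstein, pqBinom_zero_right hr, pqBinom_zero_right hr', Nat.triangle_succ r,
    pow_add, div_pow, Nat.sub_zero, Finset.prod_range_succ]
  generalize ∏ s ∈ Finset.range r, (p ^ s - q ^ s * t) = D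
  field_simp

lemma pqBernstein_succ_succ (hp : p ≠ 0) {r k : ℕ} (hk : k < r)
    (hr : pqFact p q (r + 1) ≠ 0) (t : ℝ) :
    pqBernstein p q (r + 1) (k + 1) t =
      (1 - (q / p) ^ (r - (k + 1)) * t) * pqBernstein p q r (k + 1) t +
        (q / p) ^ (r - k) * t * pqBernstein p q r k t := by
  obtain ⟨d, rfl⟩ := Nat.exists_eq_add_of_lt hk
  simp only [pqBernstein, pqBinom_succ_succ hk hr, Nat.triangle_succ (k + d + 1),
    Nat.triangle_succ k, show k + d + 1 + 1 - (k + 1) = d + 1 by omega,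
    show k + d + 1 - (k + 1) = d by omega, show k + d + 1 - k = d + 1 by omega,
    Finset.prod_range_succ, div_pow]
  generalize ∏ s ∈ Finset.range d, (p ^ s - q ^ s * t) = D
  field_simp
  ring

lemma sum_pqBernstein_succ (hp : p ≠ 0) {r : ℕ} (hr : pqFact p q (r + 1) ≠ 0) (t : ℝ)
    (Q : ℕ → ℝ) :
    ∑ k ∈ Finset.range (r + 2), pqBernstein p q (r + 1) k t * Q k =
      ∑ k ∈ Finset.range (r + 1), pqBernstein p q r k t *
        ((1 - (q / p) ^ (r - k) * t) * Q k + (q / p) ^ (r - k) * t * Q (k + 1)) := by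
  have hr' : pqFact p q r ≠ 0 := pqFact_ne_zero_of_le r.le_succ hr
  have interior : ∑ k ∈ Finset.range r, pqBernstein p q (r + 1) (k + 1) t * Q (k + 1) =
      ∑ k ∈ Finset.range r, (1 - (q / p) ^ (r - (k + 1)) * t) *
          pqBernstein p q r (k + 1) t * Q (k + 1) +
        ∑ k ∈ Finset.range r, (q / p) ^ (r - k) * t * pqBernstein p q r k t * Q (k + 1) := by
    rw [← Finset.sum_add_distrib]
    refine Finset.sum_congr rfl fun k hk => ?_
    rw [pqBernstein_succ_succ hp (Finset.mem_range.mp hk) hr, add_mul]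
  calc
    _ = ∑ k ∈ Finset.range r, pqBernstein p q (r + 1) (k + 1) t * Q (k + 1) +
          t ^ (r + 1) * Q (r + 1) + (1 - (q / p) ^ r * t) * pqBernstein p q r 0 t * Q 0 := by
      rw [Finset.sum_range_succ', Finset.sum_range_succ, pqBernstein_self hp hr,
        pqBernstein_succ_zero hp hr]
    _ = ∑ k ∈ Finset.range (r + 1), (1 - (q / p) ^ (r - k) * t) * pqBernstein p q r k t * Q k +
          ∑ k ∈ Finset.range (r + 1),
            (q / p) ^ (r - k) * t * pqBernstein p q r k t * Q (k + 1) := by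
      rw [interior, Finset.sum_range_succ' _ r, Finset.sum_range_succ _ r,
        pqBernstein_self hp hr', Nat.sub_self, Nat.sub_zero]
      ring
    _ = _ := by
      rw [← Finset.sum_add_distrib]
      exact Finset.sum_congr rfl fun k _ => by ring

end Bernstein

section LinearIndependence

open Polynomial

lemma linearIndepOn_X_pow_mul {R : Type*} [Ring R] [NoZeroDivisors R] {g : ℕ → R[X]}
    {s : Set ℕ} (hg : ∀ k ∈ s, (g k).coeff 0 ≠ 0) :
    LinearIndepOn R (fun k => X ^ k * g k) s := by
  refine linearIndepOn_iff'.mpr fun T d hT hsum k => ?_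
  induction k using Nat.strong_induction_on with
  | _ k ih =>
    intro hk
    have hcoeff : (∑ j ∈ T, d j • (X ^ j * g j)).coeff k = d k * (g k).coeff 0 := by
      rw [finsetSum_coeff, Finset.sum_eq_single_of_mem k hk fun j hj hjk => ?_]
      · simp [coeff_X_pow_mul']
      rcases hjk.lt_or_gt with hlt | hgt
      · simp [ih j hlt hj]
      · simp [coeff_X_pow_mul', hgt.not_ge]
    rw [hsum, coeff_zero] at hcoeff
    exact (mul_eq_zero.mp hcoeff.symm).resolve_right (hg k (hT hk))

lemma linearIndepOn_pqBernstein {p q : ℝ} (hp : p ≠ 0) {n : ℕ} (hn : pqFact p q n ≠ 0) :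
    LinearIndepOn ℝ (pqBernstein p q n) (Finset.range (n + 1)) := by
  let g (k : ℕ) : ℝ[X] :=
    C (p ^ (k * (k - 1) / 2) / p ^ (n * (n - 1) / 2) * pqBinom p q n k) *
      ∏ s ∈ Finset.range (n - k), (C (p ^ s) - C (q ^ s) * X)
  have hg : ∀ k ∈ (Finset.range (n + 1) : Set ℕ), (g k).coeff 0 ≠ 0 := fun k hk => by
    have hk : k ≤ n := Finset.mem_range_succ_iff.mp hk
    simp [g, coeff_zero_eq_eval_zero, eval_prod, Finset.prod_ne_zero_iff, hp,
      pqBinom_ne_zero hk hn]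
  let evalFun : ℝ[X] →ₗ[ℝ] ℝ → ℝ := LinearMap.pi fun t => leval t
  have evalFun_injective : LinearMap.ker evalFun = ⊥ :=
    LinearMap.ker_eq_bot.mpr fun P Q h => funext fun t => congrFun h t
  have hmap : pqBernstein p q n = evalFun ∘ fun k => X ^ k * g k := by
    ext k t
    simp [pqBernstein, evalFun, g, eval_prod]
    ring
  rw [hmap]
  exact (linearIndepOn_X_pow_mul hg).map' evalFun evalFun_injective

end LinearIndependence

section Blossom

variable {n : ℕ} {s : (Fin n → ℝ) → ℝ}

lemma IsMultiaffine.apply_update_add (haff : IsMultiaffine n s) (j : Fin n) (u : Fin n → ℝ)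
    (c x y : ℝ) :
    s (Function.update u j ((1 - c) * x + c * y)) =
      (1 - c) * s (Function.update u j x) + c * s (Function.update u j y) := by
  obtain ⟨a, b, hab⟩ := haff j u
  rw [hab, hab, hab]
  ring

/-- The arguments `(0, …, 0, w_0, …, w_{k-1}, w_r t, …, w_{n-1} t)`, with `r - k` zeros, at which
the blossom takes the `k`-th value of level `r` of the de Casteljau scheme, for `k ≤ r ≤ n`. With
the zeros in front, level `n` consists of the arguments in the dual functional property. -/
def deCasteljauArg (n : ℕ) (w : ℕ → ℝ) (t : ℝ) (r k : ℕ) (i : Fin n) : ℝ :=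
  if (i : ℕ) < r - k then 0 else if (i : ℕ) < r then w (i - (r - k)) else w i * t

lemma deCasteljauArg_level_zero (w : ℕ → ℝ) (t : ℝ) (k : ℕ) :
    deCasteljauArg n w t 0 k = fun i : Fin n => w i * t := by
  ext i
  simp [deCasteljauArg]

lemma deCasteljauArg_level_self (w : ℕ → ℝ) (t : ℝ) (k : ℕ) :
    deCasteljauArg n w t n k =
      fun i : Fin n => if (i : ℕ) < n - k then 0 else w (i - (n - k)) := by
  ext i
  simp [deCasteljauArg]

lemma update_deCasteljauArg_mul (w : ℕ → ℝ) (t : ℝ) (r : Fin n) (k : ℕ) :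
    Function.update (deCasteljauArg n w t r k) r (w r * t) = deCasteljauArg n w t r k := by
  rw [Function.update_eq_self_iff]
  simp [deCasteljauArg]

lemma update_deCasteljauArg_node (w : ℕ → ℝ) (t : ℝ) {r : Fin n} {k : ℕ} (hk : k ≤ r) :
    Function.update (deCasteljauArg n w t r k) r (w k) = deCasteljauArg n w t (r + 1) (k + 1) := by
  ext i
  rcases eq_or_ne i r with rfl | hi
  · simp [deCasteljauArg, Nat.sub_sub_self hk]
  · have hlt : (i : ℕ) < r + 1 ↔ (i : ℕ) < r := by grind
    simp [deCasteljauArg, hi, hlt]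

lemma deCasteljauArg_succ_comp_cycleIcc (w : ℕ → ℝ) (t : ℝ) {first r : Fin n} {k : ℕ}
    (hk : k ≤ r) (hfirst : (first : ℕ) = r - k) :
    (fun i => deCasteljauArg n w t (r + 1) k (Fin.cycleIcc first r i)) =
      Function.update (deCasteljauArg n w t r k) r 0 := by
  have : NeZero n := ⟨r.pos.ne'⟩
  ext i
  rcases lt_or_ge i first with hlt | hge
  · rw [Fin.cycleIcc_of_lt hlt]
    grind [deCasteljauArg]
  rcases lt_trichotomy i r with hlt | rfl | hgt
  · rw [Fin.cycleIcc_of_ge_of_lt hge hlt]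
    have hval : ((i + 1 : Fin n) : ℕ) = i + 1 := Fin.val_add_one_of_lt' (by omega)
    grind [deCasteljauArg]
  · rw [Fin.cycleIcc_of_last hge]
    grind [deCasteljauArg]
  · rw [Fin.cycleIcc_of_gt hgt]
    grind [deCasteljauArg]

lemma IsSymmetricFn.apply_update_deCasteljauArg_zero (hsym : IsSymmetricFn n s) (w : ℕ → ℝ)
    (t : ℝ) {r : Fin n} {k : ℕ} (hk : k ≤ r) :
    s (Function.update (deCasteljauArg n w t r k) r 0) = s (deCasteljauArg n w t (r + 1) k) := by
  rw [← deCasteljauArg_succ_comp_cycleIcc (first := ⟨r - k, by omega⟩) w t hk rfl, hsym]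

lemma IsMultiaffine.apply_deCasteljauArg (haff : IsMultiaffine n s) (hsym : IsSymmetricFn n s)
    {w : ℕ → ℝ} (t : ℝ) {c : ℝ} {r : Fin n} {k : ℕ} (hk : k ≤ r) (hw : w r * t = c * w k) :
    s (deCasteljauArg n w t r k) =
      (1 - c) * s (deCasteljauArg n w t (r + 1) k) +
        c * s (deCasteljauArg n w t (r + 1) (k + 1)) := by
  calc s (deCasteljauArg n w t r k)
      = s (Function.update (deCasteljauArg n w t r k) r ((1 - c) * 0 + c * w k)) := by
        rw [mul_zero, zero_add, ← hw, update_deCasteljauArg_mul]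
    _ = _ := by
        rw [haff.apply_update_add, hsym.apply_update_deCasteljauArg_zero w t hk,
          update_deCasteljauArg_node w t hk]

theorem IsMultiaffine.apply_diagonal_eq_sum_pqBernstein (haff : IsMultiaffine n s)
    (hsym : IsSymmetricFn n s) {p q : ℝ} (hp : p ≠ 0) {w : ℕ → ℝ}
    (hw : ∀ k r, k ≤ r → r < n → w r = (q / p) ^ (r - k) * w k) (t : ℝ) {r : ℕ} (hr : r ≤ n)
    (hfact : pqFact p q r ≠ 0) :
    s (fun i => w i * t) =
      ∑ k ∈ Finset.range (r + 1), pqBernstein p q r k t * s (deCasteljauArg n w t r k) := by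
  induction r with
  | zero => simp [pqBernstein, pqBinom, pqFact, deCasteljauArg_level_zero]
  | succ r ih =>
    rw [ih (by omega) (pqFact_ne_zero_of_le r.le_succ hfact), sum_pqBernstein_succ hp hfact]
    refine Finset.sum_congr rfl fun k hk => ?_
    have hk : k ≤ r := Finset.mem_range_succ_iff.mp hk
    have hwt : w r * t = (q / p) ^ (r - k) * t * w k := by
      rw [hw k r hk hr]
      ring
    exact congrArg _ (haff.apply_deCasteljauArg hsym t (r := ⟨r, hr⟩) hk hwt)

end Blossom

lemma pow_sub_mul_pow_eq_div_pow_mul {K : Type*} [Field K] {p : K} (hp : p ≠ 0) (q : K)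
    {k r m : ℕ} (hk : k ≤ r) (hr : r ≤ m) :
    p ^ (m - r) * q ^ r = (q / p) ^ (r - k) * (p ^ (m - k) * q ^ k) := by
  obtain ⟨d, rfl⟩ := Nat.exists_eq_add_of_le hk
  rw [show m - k = m - (k + d) + d by omega, Nat.add_sub_cancel_left, div_pow, pow_add, pow_add]
  field_simp

theorem pq_blossom_dual_functional_general (n : ℕ) (p q : ℝ) (hp : p ≠ 0)
    (hn : pqFact p q n ≠ 0) (P : ℕ → ℝ) (S : ℝ → ℝ)
    (hS : ∀ t : ℝ, S t = ∑ k ∈ Finset.range (n + 1), P k * pqBernstein p q n k t)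
    (s : (Fin n → ℝ) → ℝ)
    (hsym : IsSymmetricFn n s) (haff : IsMultiaffine n s)
    (hdiag : ∀ t : ℝ, s (fun i => p ^ (n - 1 - (i : ℕ)) * q ^ (i : ℕ) * t) = S t) :
    ∀ k ≤ n, P k =
      s (fun i : Fin n => if (i : ℕ) < n - k then 0
          else p ^ (n - 1 - ((i : ℕ) - (n - k))) * q ^ ((i : ℕ) - (n - k))) := by
  let w (i : ℕ) : ℝ := p ^ (n - 1 - i) * q ^ i
  have hw (k r : ℕ) (hk : k ≤ r) (hr : r < n) : w r = (q / p) ^ (r - k) * w k :=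
    pow_sub_mul_pow_eq_div_pow_mul hp q hk (Nat.le_sub_one_of_lt hr)
  let Q (k : ℕ) : ℝ := s fun i => if (i : ℕ) < n - k then 0 else w (i - (n - k))
  have sum_smul_eq : ∑ k ∈ Finset.range (n + 1), P k • pqBernstein p q n k =
      ∑ k ∈ Finset.range (n + 1), Q k • pqBernstein p q n k := by
    ext t
    have hQ := haff.apply_diagonal_eq_sum_pqBernstein hsym hp hw t le_rfl hn
    simp only [deCasteljauArg_level_self] at hQ
    simpa [← hS, mul_comm] using (hdiag t).symm.trans hQ
  intro k hk
  exact linearIndepOn_finset_iffₛ.mp (linearIndepOn_pqBernstein hp hn) P Q sum_smul_eq k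
    (Finset.mem_range_succ_iff.mpr hk)

/-- dual functional property of the (p,q)-blossom.  If `s` is the
(p,q)-blossom of the (p,q)-Bézier curve `S(t) = Σ_{k=0}^{n} P_k B_k^n(t;p,q)`, then
`P_k = s(0, …, 0, p^{n-1}, p^{n-2}q, …, p^{n-k}q^{k-1})` (first `n-k` arguments zero). -/
theorem pq_blossom_dual_functional (n : ℕ) (hn : 1 ≤ n)
    (p q : ℝ) (h0 : 0 < q) (hqp : q < p)
    (P : ℕ → ℝ) (S : ℝ → ℝ)
    (hS : ∀ t : ℝ, S t = ∑ k ∈ Finset.range (n + 1), P k * pqBernstein p q n k t)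
    (s : (Fin n → ℝ) → ℝ)
    (hsym : IsSymmetricFn n s) (haff : IsMultiaffine n s)
    (hdiag : ∀ t : ℝ, s (fun i => p ^ (n - 1 - (i : ℕ)) * q ^ (i : ℕ) * t) = S t) :
    ∀ k ≤ n, P k =
      s (fun i : Fin n => if (i : ℕ) < n - k then 0
          else p ^ (n - 1 - ((i : ℕ) - (n - k))) * q ^ ((i : ℕ) - (n - k))) := by
  have hp : 0 < p := h0.trans hqp
  exact pq_blossom_dual_functional_general n p q hp.ne' (pqFact_pos hp h0 n).ne' P S hS s hsym
    haff hdiag
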